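/- Let μ ∈ ℝ, let h : ℝ → ℝ be smooth with h'(x) ≠ 0 for all x, and let a₀, a₁, a₂, a₃, a₄ : ℝ → ℝ be smooth. Define F(x,y,p_x,p_y) = e^{μy}·Σ_{k=0}^{4} a_k(x)·p_x^{4−k}·p_y^{k} and H(x,y,p_x,p_y) = (1/2)h'(x)²(p_x²+p_y²). Then {F,H} = 0 identically on ℝ⁴ if and only if for every x ∈ ℝ the following six equations hold: a₀'h' − 4a₀h'' = 0; μa₀h' + a₁'h' − 3a₁h'' = 0; μa₁h' + a₂'h' − 4a₀h'' − 2a₂h'' = 0; μa₂h' + a₃'h' − 3a₁h'' − a₃h'' = 0; μa₃h' + a₄'h' − 2a₂h'' = 0; μa₄h' − a₃h'' = 0. -/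

import Mathlib

/-- Canonical Poisson bracket on ℝ⁴ with coordinates (x, y, pₓ, p_y). -/
noncomputable def pb (F G : ℝ → ℝ → ℝ → ℝ → ℝ) (x y px py : ℝ) : ℝ :=
    deriv (fun t => F x y t py) px * deriv (fun t => G t y px py) x
  - deriv (fun t => F t y px py) x * deriv (fun t => G x y t py) px
  + deriv (fun t => F x y px t) py * deriv (fun t => G x t px py) y
  - deriv (fun t => F x t px py) y * deriv (fun t => G x y px t) py

/-!
For `H = l(x)² (pₓ² + p_y²) / 2` and `F = exp (μ y) P(x; pₓ, p_y)`, with `P` homogeneous of degree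
`n` in the momenta, the bracket `{F, H}` is `-l exp (μ y)` times a binary form of degree `n + 1` in
the momenta. The prefactor never vanishes, so `{F, H} = 0` says that this form vanishes at all real
momenta, i.e. that its `n + 2` coefficients, which depend on `x` only, are zero.
-/

section BinaryForm

variable {R : Type*} [CommSemiring R] {m : ℕ}

/-- The value at `(u, v)` of the binary form `∑ k, c k * u ^ (m - 1 - k) * v ^ k` of degree `m - 1`,
as a linear map in its coefficients `c`; for `m = 0` the form is zero. -/
def binaryForm (u v : R) : (Fin m → R) →ₗ[R] R :=
  Fintype.linearCombination R fun k : Fin m => u ^ (k.rev : ℕ) * v ^ (k : ℕ)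

lemma binaryForm_apply (u v : R) (c : Fin m → R) :
    binaryForm u v c = ∑ k, c k * (u ^ (k.rev : ℕ) * v ^ (k : ℕ)) := by
  simp only [binaryForm, Fintype.linearCombination_apply, smul_eq_mul]

lemma binaryForm_snoc_zero (u v : R) (c : Fin m → R) :
    binaryForm u v (Fin.snoc c 0 : Fin (m + 1) → R) = u * binaryForm u v c := by
  simp only [binaryForm_apply, Fin.sum_univ_castSucc, Fin.snoc_castSucc, Fin.snoc_last, zero_mul,
    add_zero, Fin.rev_castSucc, Fin.val_succ, Fin.val_castSucc, Finset.mul_sum]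
  exact Finset.sum_congr rfl fun k _ => by ring

lemma binaryForm_cons_zero (u v : R) (c : Fin m → R) :
    binaryForm u v (Fin.cons 0 c : Fin (m + 1) → R) = v * binaryForm u v c := by
  simp only [binaryForm_apply, Fin.sum_univ_succ, Fin.cons_zero, Fin.cons_succ, zero_mul,
    zero_add, Fin.rev_succ, Fin.val_succ, Fin.val_castSucc, Finset.mul_sum]
  exact Finset.sum_congr rfl fun k _ => by ring

lemma binaryForm_quartic (u v : R) (c : Fin (4 + 1) → R) :
    binaryForm u v c =
      c 0 * u^4 + c 1 * u^3 * v + c 2 * u^2 * v^2 + c 3 * u * v^3 + c 4 * v^4 := by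
  rw [binaryForm_apply, Fin.sum_univ_five]
  change c 0 * (u^4 * v^0) + c 1 * (u^3 * v^1) + c 2 * (u^2 * v^2) + c 3 * (u^1 * v^3)
    + c 4 * (u^0 * v^4) = _
  ring

/-- The coefficients of the partial derivative with respect to `u` of the binary form in `(u, v)`
with coefficients `c`. -/
def derivCoeff (c : Fin (m + 1) → R) : Fin m → R :=
  fun k => ((k.rev : ℕ) + 1) * c k.castSucc

lemma derivCoeff_quartic (c : Fin (4 + 1) → R) :
    derivCoeff c = ![4 * c 0, 3 * c 1, 2 * c 2, c 3] := by
  ext k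
  fin_cases k <;> simp [derivCoeff] <;> norm_num

lemma forall_binaryForm_eq_zero_iff {R : Type*} [CommRing R] [IsDomain R] [Infinite R]
    {c : Fin m → R} :
    (∀ u v, binaryForm u v c = 0) ↔ c = 0 := by
  refine ⟨fun hc => ?_, fun hc u v => by rw [hc, map_zero]⟩
  have node_injective : Function.Injective fun k : Fin m => Infinite.natEmbedding R k :=
    (Infinite.natEmbedding R).injective.comp Fin.val_injective
  refine Matrix.eq_zero_of_forall_index_sum_pow_mul_eq_zero node_injective fun j => ?_
  simpa only [binaryForm_apply, one_pow, one_mul, mul_comm] using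
    hc 1 (Infinite.natEmbedding R j)

end BinaryForm

section Derivatives

variable {𝕜 : Type*} [NontriviallyNormedField 𝕜] {m : ℕ}

lemma hasDerivAt_binaryForm_left (u v : 𝕜) (c : Fin (m + 1) → 𝕜) :
    HasDerivAt (fun t => binaryForm t v c) (binaryForm u v (derivCoeff c)) u := by
  simp only [binaryForm_apply, derivCoeff, Fin.sum_univ_castSucc (n := m), Fin.rev_castSucc,
    Fin.rev_last, Fin.val_succ, Fin.val_zero, pow_zero]
  refine HasDerivAt.add_const _ (HasDerivAt.fun_sum fun k _ => ?_)
  refine (((hasDerivAt_pow (k.rev + 1 : ℕ) u).mul_const (v ^ (k : ℕ))).const_mul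
    (c k.castSucc)).congr_deriv ?_
  push_cast [Nat.add_sub_cancel]
  ring

lemma hasDerivAt_binaryForm_coeff (u v : 𝕜) {c : Fin m → 𝕜 → 𝕜} {c' : Fin m → 𝕜} {x : 𝕜}
    (hc : ∀ k, HasDerivAt (c k) (c' k) x) :
    HasDerivAt (fun t => binaryForm u v fun k => c k t) (binaryForm u v c') x := by
  simp only [binaryForm_apply]
  exact HasDerivAt.fun_sum fun k _ => (hc k).mul_const _

end Derivatives

/-- The geodesic Hamiltonian of the metric `l(x)⁻² (dx² + dy²)`. -/
noncomputable def geodesicHamiltonian (l : ℝ → ℝ) : ℝ → ℝ → ℝ → ℝ → ℝ :=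
  fun x _ px py => (1/2) * (l x)^2 * (px^2 + py^2)

lemma pb_geodesicHamiltonian (F : ℝ → ℝ → ℝ → ℝ → ℝ) {l : ℝ → ℝ} {x : ℝ}
    (hl : DifferentiableAt ℝ l x) (y px py : ℝ) :
    pb F (geodesicHamiltonian l) x y px py =
      l x * (deriv l x * (px^2 + py^2) * deriv (fun t => F x y t py) px
        - l x * (px * deriv (fun t => F t y px py) x + py * deriv (fun t => F x t px py) y)) := by
  have hHx : HasDerivAt (fun t => (1/2) * (l t)^2 * (px^2 + py^2))
      (l x * deriv l x * (px^2 + py^2)) x :=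
    (((hl.hasDerivAt.fun_pow 2).const_mul (1/2)).mul_const (px^2 + py^2)).congr_deriv
      (by push_cast; ring)
  have hHpx : HasDerivAt (fun t => (1/2) * (l x)^2 * (t^2 + py^2)) ((l x)^2 * px) px :=
    (((hasDerivAt_pow 2 px).add_const (py^2)).const_mul ((1/2) * (l x)^2)).congr_deriv
      (by push_cast; ring)
  have hHpy : HasDerivAt (fun t => (1/2) * (l x)^2 * (px^2 + t^2)) ((l x)^2 * py) py :=
    (((hasDerivAt_pow 2 py).const_add (px^2)).const_mul ((1/2) * (l x)^2)).congr_deriv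
      (by push_cast; ring)
  simp only [pb, geodesicHamiltonian, hHx.deriv, hHpx.deriv, hHpy.deriv, deriv_const]
  ring

section BracketCoeff

variable {n : ℕ}

/-- The `n + 2` coefficients of the binary form in the momenta which, multiplied by
`-l * exp (μ * y)`, is the bracket of `exp (μ * y) * binaryForm px py a` with the geodesic
Hamiltonian of `l`. The arguments `l`, `l'`, `a`, `a'` are values at one point `x`, the primed ones
those of the `x`-derivatives. Appending a zero coefficient multiplies a form by `px`, prepending one
multiplies it by `py`. -/
def bracketCoeff (μ l l' : ℝ) (a a' : Fin (n + 1) → ℝ) : Fin (n + 2) → ℝ :=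
  l • ((Fin.snoc a' 0 : Fin (n + 2) → ℝ) + μ • (Fin.cons 0 a : Fin (n + 2) → ℝ))
    - l' • ((Fin.snoc (Fin.snoc (derivCoeff a) 0 : Fin (n + 1) → ℝ) 0 : Fin (n + 2) → ℝ)
      + (Fin.cons 0 (Fin.cons 0 (derivCoeff a) : Fin (n + 1) → ℝ) : Fin (n + 2) → ℝ))

lemma binaryForm_bracketCoeff (μ l l' : ℝ) (a a' : Fin (n + 1) → ℝ) (u v : ℝ) :
    binaryForm u v (bracketCoeff μ l l' a a') =
      l * (u * binaryForm u v a' + μ * v * binaryForm u v a)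
        - l' * (u^2 + v^2) * binaryForm u v (derivCoeff a) := by
  simp only [bracketCoeff, map_sub, map_add, map_smul, smul_eq_mul, binaryForm_snoc_zero,
    binaryForm_cons_zero]
  ring

lemma bracketCoeff_quartic (μ l l' : ℝ) (a a' : Fin (4 + 1) → ℝ) :
    bracketCoeff μ l l' a a' =
      ![a' 0 * l - 4 * a 0 * l',
        μ * a 0 * l + a' 1 * l - 3 * a 1 * l',
        μ * a 1 * l + a' 2 * l - 4 * a 0 * l' - 2 * a 2 * l',
        μ * a 2 * l + a' 3 * l - 3 * a 1 * l' - a 3 * l',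
        μ * a 3 * l + a' 4 * l - 2 * a 2 * l',
        μ * a 4 * l - a 3 * l'] := by
  have hsnoc : (Fin.snoc a' 0 : Fin 6 → ℝ) = ![a' 0, a' 1, a' 2, a' 3, a' 4, 0] := by
    ext k; fin_cases k <;> rfl
  have hcons : (Fin.cons 0 a : Fin 6 → ℝ) = ![0, a 0, a 1, a 2, a 3, a 4] := by
    ext k; fin_cases k <;> rfl
  rw [bracketCoeff, derivCoeff_quartic, hsnoc, hcons]
  ext k
  fin_cases k <;> simp <;> ring

lemma pb_exp_mul_binaryForm (μ : ℝ) {l : ℝ → ℝ} {a : Fin (n + 1) → ℝ → ℝ} {x : ℝ}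
    (hl : DifferentiableAt ℝ l x) (ha : ∀ k, DifferentiableAt ℝ (a k) x) (y px py : ℝ) :
    pb (fun x y px py => Real.exp (μ * y) * binaryForm px py fun k => a k x)
        (geodesicHamiltonian l) x y px py =
      -(l x * Real.exp (μ * y)) * binaryForm px py
        (bracketCoeff μ (l x) (deriv l x) (fun k => a k x) fun k => deriv (a k) x) := by
  have hFpx := (hasDerivAt_binaryForm_left px py fun k => a k x).const_mul (Real.exp (μ * y))
  have hFx := (hasDerivAt_binaryForm_coeff px py fun k => (ha k).hasDerivAt).const_mul
    (Real.exp (μ * y))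
  have hFy := ((hasDerivAt_const_mul μ).exp (x := y)).mul_const (binaryForm px py fun k => a k x)
  rw [pb_geodesicHamiltonian _ hl, hFpx.deriv, hFx.deriv, hFy.deriv, binaryForm_bracketCoeff]
  ring

end BracketCoeff

theorem stmt_1_general {n : ℕ} (μ : ℝ) {l : ℝ → ℝ} {a : Fin (n + 1) → ℝ → ℝ}
    (hl : Differentiable ℝ l) (hl_ne : ∀ x, l x ≠ 0) (ha : ∀ k, Differentiable ℝ (a k)) :
    (∀ x y px py : ℝ,
      pb (fun x y px py => Real.exp (μ * y) * binaryForm px py fun k => a k x)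
        (geodesicHamiltonian l) x y px py = 0)
    ↔ ∀ x, bracketCoeff μ (l x) (deriv l x) (fun k => a k x) (fun k => deriv (a k) x) = 0 := by
  refine forall_congr' fun x => ?_
  have factor_ne_zero (y : ℝ) : -(l x * Real.exp (μ * y)) ≠ 0 :=
    neg_ne_zero.mpr (mul_ne_zero (hl_ne x) (Real.exp_ne_zero _))
  simp only [pb_exp_mul_binaryForm μ (hl x) fun k => ha k x, mul_eq_zero, factor_ne_zero,
    false_or, forall_const, forall_binaryForm_eq_zero_iff]

theorem stmt_1 (μ : ℝ) (h a0 a1 a2 a3 a4 : ℝ → ℝ)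
    (hh : ContDiff ℝ (⊤ : ℕ∞) h) (hhx : ∀ x, deriv h x ≠ 0)
    (ha0 : ContDiff ℝ (⊤ : ℕ∞) a0) (ha1 : ContDiff ℝ (⊤ : ℕ∞) a1)
    (ha2 : ContDiff ℝ (⊤ : ℕ∞) a2) (ha3 : ContDiff ℝ (⊤ : ℕ∞) a3) (ha4 : ContDiff ℝ (⊤ : ℕ∞) a4) :
    (∀ x y px py : ℝ,
      pb (fun x y px py => Real.exp (μ * y) *
           (a0 x * px^4 + a1 x * px^3 * py + a2 x * px^2 * py^2
            + a3 x * px * py^3 + a4 x * py^4))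
         (fun x _y px py => (1/2) * (deriv h x)^2 * (px^2 + py^2))
         x y px py = 0)
    ↔ (∀ x : ℝ,
        deriv a0 x * deriv h x - 4 * a0 x * deriv (deriv h) x = 0
      ∧ μ * a0 x * deriv h x + deriv a1 x * deriv h x - 3 * a1 x * deriv (deriv h) x = 0
      ∧ μ * a1 x * deriv h x + deriv a2 x * deriv h x
          - 4 * a0 x * deriv (deriv h) x - 2 * a2 x * deriv (deriv h) x = 0
      ∧ μ * a2 x * deriv h x + deriv a3 x * deriv h x
          - 3 * a1 x * deriv (deriv h) x - a3 x * deriv (deriv h) x = 0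
      ∧ μ * a3 x * deriv h x + deriv a4 x * deriv h x - 2 * a2 x * deriv (deriv h) x = 0
      ∧ μ * a4 x * deriv h x - a3 x * deriv (deriv h) x = 0) := by
  have hdiff {f : ℝ → ℝ} (hf : ContDiff ℝ (⊤ : ℕ∞) f) : Differentiable ℝ f :=
    hf.differentiable (by simp)
  have ha : ∀ k, Differentiable ℝ (![a0, a1, a2, a3, a4] k) := by
    simp only [Fin.forall_fin_succ, IsEmpty.forall_iff, and_true]
    exact ⟨hdiff ha0, hdiff ha1, hdiff ha2, hdiff ha3, hdiff ha4⟩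
  have hgeneral := stmt_1_general μ (hdiff (contDiff_infty_iff_deriv.mp hh).2) hhx ha
  simp only [binaryForm_quartic, bracketCoeff_quartic, Matrix.cons_eq_zero_iff, Matrix.zero_empty,
    and_true] at hgeneral
  exact hgeneral
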